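/- Let K be a UFD of characteristic p > 0 and let d be an irreducible K-derivation of K[x_1, …, x_n], i.e. gcd(d(x_1), …, d(x_n)) is a unit. If f_1, …, f_{n−1} ∈ K[x_1, …, x_n]^d are p-independent over K[x_1^p, …, x_n^p] and F̄ = dgcd(f_1, …, f_{n−1}), then d* = 0 if and only if d(F̄) = 0. -/

import Mathlib

open MvPolynomial

/-!
If `d` kills `v₁, …, v_r`, linearly independent over a ring `B` of constants in characteristic `p`,
and `d y ≠ 0`, then the `r p` products `vᵢ yᵏ` with `k < p` are still independent over `B`. Over
`B = K[x₁^p, …, xₙ^p]` the polynomial ring is spanned by `pⁿ` monomials, so when the `vᵢ` are the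
`p^(n-1)` products of powers of `f₁, …, f_{n-1}` these `vᵢ yᵏ` leave no room: a derivation killing
the `f_a` and `y` is zero. Hence the derivations killing the `f_a` are proportional to each other.

One of them is the Jacobian derivation, whose values on the variables are the signed maximal minors
of the Jacobian matrix. It has divergence zero, because differentiating the minors pairs the
symmetric second derivatives of the `f_a` with an alternating form. As the `d xᵢ` are coprime, it
equals `G d`, where `G` is associated with `dgcd(f₁, …, f_{n-1})`. Taking divergences gives
`0 = G d* + d G`.
-/

section Constants

variable {A R : Type*} [CommRing A] [CommRing R] [Algebra A R]

/-- The ring of constants `R^d = ker d` of a derivation `d`. -/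
def constants (d : Derivation A R R) : Subalgebra A R where
  carrier := {r | d r = 0}
  mul_mem' {r s} hr hs := by
    change d r = 0 at hr
    change d s = 0 at hs
    simp [hr, hs]
  add_mem' {r s} hr hs := by
    change d r = 0 at hr
    change d s = 0 at hs
    simp [hr, hs]
  algebraMap_mem' := d.map_algebraMap

@[simp]
theorem mem_constants {d : Derivation A R R} {r : R} : r ∈ constants d ↔ d r = 0 := Iff.rfl

/-- A derivation `d`, viewed as linear over a subalgebra `S` of constants of `d`. -/
def derivationOver (S : Subalgebra A R) (d : Derivation A R R) (hS : S ≤ constants d) :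
    Derivation S R R :=
  .mk'
    { toFun := d
      map_add' := d.map_add
      map_smul' := fun s r => by simp [Subalgebra.smul_def, mem_constants.mp (hS s.2)] }
    d.leibniz

@[simp]
theorem derivationOver_apply (S : Subalgebra A R) (d : Derivation A R R) (hS : S ≤ constants d)
    (r : R) : derivationOver S d hS r = d r := rfl

-- If `q(y) = 0`, then `q'(y) d(y) = 0`; hence `q' = 0` by induction on the degree, and below degree
-- `p` only constant polynomials have zero derivative.
theorem eq_zero_of_aeval_eq_zero_of_natDegree_lt [IsDomain R] (p : ℕ) [CharP R p]
    (d : Derivation A R R) {y : R} (hy : d y ≠ 0) (q : Polynomial (constants d))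
    (hdeg : q.natDegree < p) (hq : q.aeval y = 0) : q = 0 := by
  induction h : q.natDegree using Nat.strong_induction_on generalizing q with
  | _ k ih =>
    subst h
    by_cases hk : q.natDegree = 0
    · rw [Polynomial.eq_C_of_natDegree_eq_zero hk] at hq ⊢
      simpa using hq
    have hder : q.derivative.aeval y = 0 := by
      have := (derivationOver _ d le_rfl).map_aeval q y
      simpa [hq, hy] using this
    have hlt := Polynomial.natDegree_derivative_lt hk
    have hder0 : q.derivative = 0 := ih _ hlt _ (hlt.trans hdeg) hder rfl
    obtain ⟨j, hj⟩ := Nat.exists_eq_succ_of_ne_zero hk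
    have hlead : q.coeff (j + 1) * ((j + 1 : ℕ) : constants d) = 0 := by
      simpa [Polynomial.coeff_derivative] using congrArg (Polynomial.coeff · j) hder0
    have hunit : ((j + 1 : ℕ) : constants d) ≠ 0 := by
      intro hzero
      have hzeroR : ((j + 1 : ℕ) : R) = 0 := by simpa using congrArg Subtype.val hzero
      rw [CharP.cast_eq_zero_iff R p] at hzeroR
      exact Nat.not_dvd_of_pos_of_lt j.succ_pos (hj ▸ hdeg) hzeroR
    have hlead0 : q.coeff (j + 1) = 0 := (mul_eq_zero.mp hlead).resolve_right hunit
    rwa [← Polynomial.leadingCoeff_eq_zero, Polynomial.leadingCoeff, hj]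

theorem linearIndependent_pow_of_apply_ne_zero [IsDomain R] (p : ℕ) [CharP R p]
    (d : Derivation A R R) {y : R} (hy : d y ≠ 0) :
    LinearIndependent (constants d) fun k : Fin p => y ^ (k : ℕ) := by
  classical
  rw [Fintype.linearIndependent_iff]
  intro c hc k
  have hq : Polynomial.ofFn p c = 0 := by
    refine eq_zero_of_aeval_eq_zero_of_natDegree_lt p d hy _
      (Polynomial.ofFn_natDegree_lt k.pos c) ?_
    rw [Polynomial.ofFn_eq_sum_monomial]
    simpa [Algebra.smul_def] using hc
  rw [← Polynomial.ofFn_coeff_eq_val_of_lt c k.2, hq, Polynomial.coeff_zero]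

theorem linearIndependent_mul_pow_of_apply_ne_zero [IsDomain R] (p : ℕ) [CharP R p]
    {d : Derivation A R R} {ι : Type*} {v : ι → R} (hv : LinearIndependent A v)
    (hdv : ∀ i, d (v i) = 0) {y : R} (hdy : d y ≠ 0) :
    LinearIndependent A fun x : ι × Fin p => v x.1 * y ^ (x.2 : ℕ) := by
  have hvd : LinearIndependent A fun i => (⟨v i, hdv i⟩ : constants d) :=
    .of_comp (constants d).val.toLinearMap hv
  have hy := linearIndependent_pow_of_apply_ne_zero p d hdy
  simpa only [Subalgebra.smul_def, smul_eq_mul] using linearIndependent_smul hvd hy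

end Constants

theorem linearMap_eq_zero_of_finrank_le {B M N ι : Type*} [CommRing B] [IsDomain B]
    [AddCommGroup M] [Module B M] [Module.Finite B M] [AddCommGroup N] [Module B N]
    [Module.IsTorsionFree B N] [Fintype ι] {v : ι → M} (hv : LinearIndependent B v)
    (hcard : Module.finrank B M ≤ Fintype.card ι) (g : M →ₗ[B] N) (hg : ∀ i, g (v i) = 0) :
    g = 0 := by
  ext x
  by_contra hx
  have hker : Submodule.span B (Set.range v) ≤ LinearMap.ker g :=
    Submodule.span_le.mpr (by rintro _ ⟨i, rfl⟩; exact hg i)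
  have hx' : LinearIndependent B fun _ : Unit => x :=
    .of_comp g (.of_subsingleton () hx)
  have hdisj : Disjoint (Submodule.span B (Set.range v))
      (Submodule.span B (Set.range fun _ : Unit => x)) := by
    rw [Submodule.disjoint_def]
    intro z hz hzx
    obtain ⟨c, rfl⟩ := by simpa [Submodule.mem_span_singleton] using hzx
    have hcgx : c • g x = 0 := by simpa using hker hz
    simp [(smul_eq_zero.mp hcgx).resolve_right hx]
  have hlarge := (hv.sum_type hx' hdisj).fintype_card_le_finrank
  rw [Fintype.card_sum, Fintype.card_unit] at hlarge
  omega

section RankOne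

variable {B R : Type*} [CommRing B] [IsDomain B] [CommRing R] [IsDomain R] [Algebra B R]
  [Module.Finite B R] [Module.IsTorsionFree B R] (p : ℕ) [CharP R p]
  {ι : Type*} [Fintype ι] {v : ι → R}

theorem derivation_eq_zero_of_linearIndependent (hv : LinearIndependent B v)
    (hrank : Module.finrank B R ≤ Fintype.card ι * p)
    {d η : Derivation B R R} (hd : ∀ i, d (v i) = 0) (hη : ∀ i, η (v i) = 0)
    {y : R} (hdy : d y ≠ 0) (hηy : η y = 0) : η = 0 := by
  have hwy := linearIndependent_mul_pow_of_apply_ne_zero p hv hd hdy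
  have hker (x : ι × Fin p) : (η : R →ₗ[B] R) (v x.1 * y ^ (x.2 : ℕ)) = 0 := by
    simp [Derivation.leibniz_pow, hη, hηy]
  have hzero := linearMap_eq_zero_of_finrank_le hwy (by simpa using hrank) (η : R →ₗ[B] R) hker
  ext r
  exact LinearMap.congr_fun hzero r

theorem apply_smul_eq_apply_smul_of_linearIndependent (hv : LinearIndependent B v)
    (hrank : Module.finrank B R ≤ Fintype.card ι * p)
    {d η : Derivation B R R} (hd : ∀ i, d (v i) = 0) (hη : ∀ i, η (v i) = 0) (y : R) :
    d y • η = η y • d := by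
  by_cases hdy : d y = 0
  · by_cases hηy : η y = 0
    · simp [hdy, hηy]
    · simp [derivation_eq_zero_of_linearIndependent p hv hrank hη hd hηy hdy]
  · rw [← sub_eq_zero]
    exact derivation_eq_zero_of_linearIndependent p hv hrank hd (by simp [hd, hη]) hdy
      (by simp [mul_comm])

end RankOne

section PthPowers

variable (K : Type*) [CommRing K] (σ : Type*) (p : ℕ)

/-- The subalgebra `K[x₁^p, …, xₙ^p]`. -/
noncomputable abbrev pthPowers : Subalgebra K (MvPolynomial σ K) :=
  Algebra.adjoin K (Set.range fun i : σ => (X i : MvPolynomial σ K) ^ p)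

theorem span_pthPowers_monomials [Fintype σ] [NeZero p] :
    Submodule.span (pthPowers K σ p)
      (Set.range fun e : σ → Fin p => ∏ i, (X i : MvPolynomial σ K) ^ (e i : ℕ)) = ⊤ := by
  rw [eq_top_iff]
  rintro g -
  induction g using MvPolynomial.induction_on' with
  | add f g hf hg => exact add_mem hf hg
  | monomial s a =>
    let b : pthPowers K σ p := ⟨C a * ∏ i, (X i ^ p) ^ (s i / p),
      mul_mem (Subalgebra.algebraMap_mem _ _)
        (prod_mem fun i _ => pow_mem (Algebra.subset_adjoin (Set.mem_range_self i)) _)⟩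
    have hs : monomial s a = b • ∏ i, X i ^ (s i % p) := by
      rw [Subalgebra.smul_def, smul_eq_mul, mul_assoc, ← Finset.prod_mul_distrib, monomial_eq,
        Finsupp.prod_fintype _ _ (by simp)]
      simp only [← pow_mul, ← pow_add, Nat.div_add_mod]
    rw [hs]
    exact Submodule.smul_mem _ _ (Submodule.subset_span ⟨fun i => Fin.ofNat p (s i), rfl⟩)

variable {K σ}

instance [Finite σ] [NeZero p] : Module.Finite (pthPowers K σ p) (MvPolynomial σ K) := by
  have := Fintype.ofFinite σ
  exact ⟨span_pthPowers_monomials K σ p ▸ Submodule.fg_span (Set.finite_range _)⟩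

theorem finrank_pthPowers_le [Fintype σ] [NeZero p] [Nontrivial K] :
    Module.finrank (pthPowers K σ p) (MvPolynomial σ K) ≤ p ^ Fintype.card σ := by
  classical
  simpa using finrank_le_of_span_eq_top (span_pthPowers_monomials K σ p)

theorem pthPowers_le_constants [CharP K p]
    (d : Derivation K (MvPolynomial σ K) (MvPolynomial σ K)) : pthPowers K σ p ≤ constants d := by
  refine Algebra.adjoin_le ?_
  rintro _ ⟨i, rfl⟩
  simp [Derivation.leibniz_pow]

/-- `p`-independence of a finite family of polynomials over `K[x₁^p, …, xₙ^p]`. -/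
def PIndependent {ι : Type*} [Fintype ι] (f : ι → MvPolynomial σ K) : Prop :=
  LinearIndependent (pthPowers K σ p) fun e : ι → Fin p => ∏ i, f i ^ (e i : ℕ)

variable {p}

theorem PIndependent.apply_smul_eq_apply_smul [IsDomain K] [NeZero p] [CharP K p] [Fintype σ]
    {ι : Type*} [Fintype ι] {f : ι → MvPolynomial σ K} (hf : PIndependent p f)
    (hcard : Fintype.card σ ≤ Fintype.card ι + 1)
    {d η : Derivation K (MvPolynomial σ K) (MvPolynomial σ K)}
    (hd : ∀ i, d (f i) = 0) (hη : ∀ i, η (f i) = 0) (y : MvPolynomial σ K) :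
    d y • η = η y • d := by
  classical
  have hrank : Module.finrank (pthPowers K σ p) (MvPolynomial σ K) ≤
      Fintype.card (ι → Fin p) * p := by
    calc _ ≤ p ^ Fintype.card σ := finrank_pthPowers_le p
      _ ≤ p ^ (Fintype.card ι + 1) := Nat.pow_le_pow_right (NeZero.pos p) hcard
      _ = _ := by simp [pow_succ]
  have hprod {D : Derivation K (MvPolynomial σ K) (MvPolynomial σ K)} (hD : ∀ i, D (f i) = 0)
      (e : ι → Fin p) : ∏ i, f i ^ (e i : ℕ) ∈ constants D :=
    prod_mem fun i _ => pow_mem (hD i) _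
  have h := apply_smul_eq_apply_smul_of_linearIndependent p hf hrank
    (d := derivationOver _ d (pthPowers_le_constants p d))
    (η := derivationOver _ η (pthPowers_le_constants p η)) (hprod hd) (hprod hη) y
  ext1 i
  exact congrArg (fun D => D (X i)) h

end PthPowers

section SignedMinor

variable {R : Type*} [CommRing R] {m : ℕ}

/-- The minor of an `m × (m + 1)` matrix obtained by deleting column `i`, with the sign it carries
in the Laplace expansion along an additional top row. -/
def signedMinor (M : Matrix (Fin m) (Fin (m + 1)) R) (i : Fin (m + 1)) : R :=
  (-1) ^ (i : ℕ) * (M.submatrix id i.succAbove).det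

theorem det_vecCons_eq_dotProduct_signedMinor (M : Matrix (Fin m) (Fin (m + 1)) R)
    (v : Fin (m + 1) → R) : (Matrix.of (Matrix.vecCons v M)).det = v ⬝ᵥ signedMinor M := by
  rw [Matrix.det_succ_row_zero]
  refine Finset.sum_congr rfl fun i _ => ?_
  rw [signedMinor, mul_left_comm, ← mul_assoc]
  rfl

theorem signedMinor_eq_det_vecCons_single (M : Matrix (Fin m) (Fin (m + 1)) R) (i : Fin (m + 1)) :
    signedMinor M i = (Matrix.of (Matrix.vecCons (Pi.single i 1) M)).det := by
  rw [det_vecCons_eq_dotProduct_signedMinor, single_one_dotProduct]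

theorem mulVec_signedMinor (M : Matrix (Fin m) (Fin (m + 1)) R) : M.mulVec (signedMinor M) = 0 := by
  funext a
  rw [Matrix.mulVec, ← det_vecCons_eq_dotProduct_signedMinor]
  exact Matrix.det_zero_of_row_eq (Fin.succ_ne_zero a).symm rfl

theorem dvd_det_submatrix_of_dvd_signedMinor (M : Matrix (Fin m) (Fin (m + 1)) R) {g : R}
    (hg : ∀ i, g ∣ signedMinor M i) (j : Fin m → Fin (m + 1)) : g ∣ (M.submatrix id j).det := by
  by_cases hj : Function.Injective j
  · obtain ⟨i, hi⟩ : ∃ i, ∀ b, j b ≠ i := by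
      have hsurj : ¬ Function.Surjective j := fun h => by
        simpa using Fintype.card_le_of_surjective j h
      simpa [Function.Surjective] using hsurj
    choose τ hτ using fun b => Fin.exists_succAbove_eq (hi b)
    have hτ_inj : Function.Injective τ := fun a b h => hj (by rw [← hτ a, ← hτ b, h])
    let e : Equiv.Perm (Fin m) := .ofBijective τ (Finite.injective_iff_bijective.mp hτ_inj)
    have hsub : M.submatrix id j = (M.submatrix id i.succAbove).submatrix id e := by
      ext a b
      simp [e, hτ]
    rw [hsub, Matrix.det_permute']
    refine Dvd.dvd.mul_left ?_ _
    exact (isUnit_neg_one.pow (i : ℕ)).dvd_mul_left.mp (hg i)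
  · obtain ⟨a, b, hab, hne⟩ := Function.not_injective_iff.mp hj
    rw [Matrix.det_zero_of_column_eq hne fun k => by simp [hab]]
    exact dvd_zero g

theorem exists_mulVec_eq_zero_of_signedMinor_eq_zero [IsDomain R]
    {M : Matrix (Fin m) (Fin (m + 1)) R} {i : Fin (m + 1)} (h : signedMinor M i = 0) :
    ∃ v ≠ 0, v i = 0 ∧ M.mulVec v = 0 := by
  have hdet : (M.submatrix id i.succAbove).det = 0 := by simpa [signedMinor] using h
  obtain ⟨w, hw, hMw⟩ := Matrix.exists_mulVec_eq_zero_iff.mpr hdet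
  refine ⟨i.insertNth 0 w, ?_, by simp, ?_⟩
  · intro h0
    exact hw (funext fun b => by simpa using congrFun h0 (i.succAbove b))
  · funext a
    rw [← hMw]
    simp [Matrix.mulVec, dotProduct, Fin.sum_univ_succAbove _ i]

end SignedMinor

section DerivationDet

variable {A R : Type*} [CommRing A] [CommRing R] [Algebra A R]

theorem derivation_prod {ι : Type*} [DecidableEq ι] (D : Derivation A R R) (s : Finset ι)
    (g : ι → R) : D (∏ a ∈ s, g a) = ∑ a ∈ s, (∏ b ∈ s.erase a, g b) * D (g a) := by
  induction s using Finset.induction_on with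
  | empty => simp
  | insert a s ha ih =>
    rw [Finset.prod_insert ha, Derivation.leibniz, ih, Finset.sum_insert ha, Finset.erase_insert ha,
      smul_eq_mul, smul_eq_mul, Finset.mul_sum, add_comm]
    congr 1
    refine Finset.sum_congr rfl fun b hb => ?_
    have hab : a ≠ b := fun h => ha (h ▸ hb)
    rw [Finset.erase_insert_of_ne hab, Finset.prod_insert (fun h => ha (Finset.mem_of_mem_erase h)),
      mul_assoc]

theorem derivation_det {n : Type*} [Fintype n] [DecidableEq n] (D : Derivation A R R)
    (M : Matrix n n R) : D M.det = ∑ a, (M.updateRow a fun j => D (M a j)).det := by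
  simp_rw [← Matrix.det_transpose M, ← Matrix.det_transpose (M.updateRow _ _), Matrix.det_apply,
    map_sum]
  rw [Finset.sum_comm]
  refine Finset.sum_congr rfl fun σ _ => ?_
  rw [Units.smul_def, map_zsmul, derivation_prod, Finset.smul_sum]
  refine Finset.sum_congr rfl fun a _ => ?_
  rw [← Finset.prod_erase_mul _ _ (Finset.mem_univ a)]
  congr 2
  · refine Finset.prod_congr rfl fun b hb => ?_
    simp [Matrix.updateRow_ne (Finset.ne_of_mem_erase hb)]
  · simp

end DerivationDet

theorem sum_sum_mul_eq_zero_of_symm_of_alternating {ι R : Type*} [Fintype ι] [CommRing R]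
    {H S : ι → ι → R} (hH : ∀ i j, H i j = H j i) (hS : ∀ i j, S i j = -S j i)
    (hS_diag : ∀ i, S i i = 0) : ∑ i, ∑ j, H i j * S i j = 0 := by
  rw [← Fintype.sum_prod_type']
  refine Finset.sum_involution (fun x _ => x.swap) (fun x _ => ?_) (fun x _ hx hswap => hx ?_)
    (fun _ _ => Finset.mem_univ _) (fun x _ => x.swap_swap)
  · simp [hH x.2 x.1, hS x.2 x.1]
  · obtain ⟨i, j⟩ := x
    obtain rfl : j = i := congrArg Prod.fst hswap
    simp [hS_diag]

theorem det_updateRow_eq_sum_mul_det_updateRow_single {n R : Type*} [Fintype n] [DecidableEq n]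
    [CommRing R] (N : Matrix n n R) (l : n) (v : n → R) :
    (N.updateRow l v).det = ∑ j, v j * (N.updateRow l (Pi.single j 1)).det := by
  rw [← Matrix.cramer_transpose_apply, Matrix.cramer_eq_adjugate_mulVec,
    ← Matrix.adjugate_transpose]
  refine Finset.sum_congr rfl fun j _ => ?_
  simp only [Matrix.transpose_apply, Matrix.adjugate_apply, mul_comm]

theorem sum_det_updateRow_single_updateRow_eq_zero {n R : Type*} [Fintype n] [DecidableEq n]
    [CommRing R] (N : Matrix n n R) {k l : n} (hkl : k ≠ l) {H : Matrix n n R} (hH : H.IsSymm) :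
    ∑ i, ((N.updateRow k (Pi.single i 1)).updateRow l (H i)).det = 0 := by
  simp_rw [det_updateRow_eq_sum_mul_det_updateRow_single _ l (H _)]
  refine sum_sum_mul_eq_zero_of_symm_of_alternating (fun i j => (hH.apply i j).symm)
    (fun i j => ?_) fun i => ?_
  · have hswap : ((N.updateRow k (Pi.single i 1)).updateRow l (Pi.single j 1)) =
        ((N.updateRow k (Pi.single j 1)).updateRow l (Pi.single i 1)).submatrix
          (Equiv.swap k l) id := by
      ext a b
      rcases eq_or_ne a k with rfl | hak
      · simp [hkl]
      rcases eq_or_ne a l with rfl | hal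
      · simp [hkl]
      · simp [Equiv.swap_apply_of_ne_of_ne hak hal, hak, hal]
    rw [hswap, Matrix.det_permute, Equiv.Perm.sign_swap hkl]
    simp
  · exact Matrix.det_zero_of_row_eq hkl (by simp [Matrix.updateRow_ne hkl])

theorem sum_signedMinor_updateRow_eq_zero {R : Type*} [CommRing R] {m : ℕ}
    (M : Matrix (Fin m) (Fin (m + 1)) R) (a : Fin m) {H : Matrix (Fin (m + 1)) (Fin (m + 1)) R}
    (hH : H.IsSymm) : ∑ i, signedMinor (M.updateRow a (H i)) i = 0 := by
  let N : Matrix (Fin (m + 1)) (Fin (m + 1)) R := Matrix.of (Matrix.vecCons 0 M)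
  rw [← sum_det_updateRow_single_updateRow_eq_zero N (Fin.succ_ne_zero a).symm hH]
  refine Finset.sum_congr rfl fun i _ => ?_
  rw [signedMinor_eq_det_vecCons_single]
  congr 1
  ext b j
  cases b using Fin.cases with
  | zero => simp [Matrix.updateRow_apply, (Fin.succ_ne_zero a).symm]
  | succ b =>
    simp only [Matrix.updateRow_apply, Fin.succ_inj, Fin.succ_ne_zero, if_false]
    exact Matrix.updateRow_apply

theorem derivation_signedMinor {A R : Type*} [CommRing A] [CommRing R] [Algebra A R]
    {m : ℕ} (D : Derivation A R R) (M : Matrix (Fin m) (Fin (m + 1)) R) (i : Fin (m + 1)) :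
    D (signedMinor M i) = ∑ a, signedMinor (M.updateRow a fun j => D (M a j)) i := by
  have hsign : D ((-1) ^ (i : ℕ)) = 0 := by simp [Derivation.leibniz_pow]
  simp_rw [signedMinor, Derivation.leibniz, hsign, smul_zero, add_zero, smul_eq_mul, derivation_det,
    Finset.mul_sum]
  refine Finset.sum_congr rfl fun a _ => ?_
  congr 2
  ext b j
  simp [Matrix.updateRow_apply]

theorem sum_derivation_signedMinor_eq_zero {A R : Type*} [CommRing A] [CommRing R] [Algebra A R]
    {m : ℕ} {δ : Fin (m + 1) → Derivation A R R} (hδ : ∀ i j r, δ i (δ j r) = δ j (δ i r))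
    (f : Fin m → R) :
    ∑ i, δ i (signedMinor (Matrix.of fun a j => δ j (f a)) i) = 0 := by
  simp_rw [derivation_signedMinor]
  rw [Finset.sum_comm]
  exact Finset.sum_eq_zero fun a _ => sum_signedMinor_updateRow_eq_zero _ a
    (H := Matrix.of fun i j => δ i (δ j (f a))) (Matrix.IsSymm.ext fun i j => hδ j i (f a))

section UniqueFactorization

theorem exists_eq_mul_of_mul_eq_mul {R ι : Type*} [CommMonoidWithZero R] [Nontrivial R]
    [UniqueFactorizationMonoid R] {v w : ι → R} (hv : ∀ q, (∀ i, q ∣ v i) → IsUnit q)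
    (h : ∀ i j, v i * w j = w i * v j) : ∃ g, ∀ i, w i = g * v i := by
  obtain ⟨k, hk⟩ : ∃ k, v k ≠ 0 := by
    by_contra! h0
    exact not_isUnit_zero (hv 0 fun i => by rw [h0 i])
  obtain ⟨a, b, c, hab, hca, hcb⟩ :=
    UniqueFactorizationMonoid.exists_reduced_factors (v k) hk (w k)
  have hc : c ≠ 0 := left_ne_zero_of_mul (hca ▸ hk)
  have hcross (i : ι) : a * w i = b * v i := by
    refine mul_left_cancel₀ hc ?_
    rw [← mul_assoc, ← mul_assoc, hca, hcb, h]
  obtain ⟨u, rfl⟩ : IsUnit a := hv a fun i => hab.dvd_of_dvd_mul_left ⟨w i, (hcross i).symm⟩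
  refine ⟨↑u⁻¹ * b, fun i => ?_⟩
  rw [mul_assoc, ← hcross, u.inv_mul_cancel_left]

theorem associated_of_dvd_of_forall_dvd_mul {R ι : Type*} [CommMonoidWithZero R]
    [IsLeftCancelMulZero R] {v : ι → R} (hv : ∀ q, (∀ i, q ∣ v i) → IsUnit q) {g h : R} (hg : g ≠ 0)
    (hgh : g ∣ h) (hdvd : ∀ i, h ∣ g * v i) : Associated g h := by
  obtain ⟨c, rfl⟩ := hgh
  have hc : IsUnit c := hv c fun i => (mul_dvd_mul_iff_left hg).mp (hdvd i)
  exact associated_mul_unit_right g c hc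

end UniqueFactorization

section Jacobian

variable {K σ : Type*} [CommRing K]

theorem derivation_eq_zero_iff_of_associated [IsReduced K]
    {N : Type*} [AddCommGroup N] [Module K N] [Module (MvPolynomial σ K) N]
    (D : Derivation K (MvPolynomial σ K) N) {g h : MvPolynomial σ K} (hgh : Associated g h) :
    D g = 0 ↔ D h = 0 := by
  obtain ⟨u, rfl⟩ := hgh
  obtain ⟨c, -, hc⟩ := MvPolynomial.isUnit_iff_eq_C_of_isReduced.mp u.isUnit
  have hu : D u = 0 := by rw [hc, derivation_C]
  rw [Derivation.leibniz, hu, smul_zero, zero_add, u.isUnit.smul_eq_zero]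

theorem pderiv_pderiv_comm (i j : σ) (g : MvPolynomial σ K) :
    pderiv i (pderiv j g) = pderiv j (pderiv i g) := by
  classical
  have h : ⁅pderiv (R := K) i, pderiv (R := K) j⁆ = 0 := by
    ext1 k
    simp [Derivation.commutator_apply, pderiv_X, Pi.single_apply, apply_ite]
  simpa [Derivation.commutator_apply, sub_eq_zero] using congrArg (fun D => D g) h

theorem derivation_apply_eq_sum_mul_pderiv [Fintype σ]
    (D : Derivation K (MvPolynomial σ K) (MvPolynomial σ K)) (g : MvPolynomial σ K) :
    D g = ∑ i, D (X i) * pderiv i g := by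
  classical
  induction g using MvPolynomial.induction_on with
  | C a => simp
  | add g h hg hh => simp only [map_add, hg, hh, mul_add, Finset.sum_add_distrib]
  | mul_X g k hg =>
    simp [hg, pderiv_X, Pi.single_apply, mul_add, Finset.sum_add_distrib, Finset.mul_sum,
      mul_left_comm, mul_comm]

/-- The divergence `d* = ∑ᵢ ∂(d xᵢ)/∂xᵢ` of a derivation of a polynomial ring. -/
noncomputable def divergence [Fintype σ] (d : Derivation K (MvPolynomial σ K) (MvPolynomial σ K)) :
    MvPolynomial σ K :=
  ∑ i, pderiv i (d (X i))

theorem divergence_smul [Fintype σ] (g : MvPolynomial σ K)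
    (d : Derivation K (MvPolynomial σ K) (MvPolynomial σ K)) :
    divergence (g • d) = g * divergence d + d g := by
  rw [derivation_apply_eq_sum_mul_pderiv d g, divergence, divergence, Finset.mul_sum,
    ← Finset.sum_add_distrib]
  simp

/-- The Jacobian matrix `(∂f_a/∂x_j)`, with one row for each polynomial of the family. -/
noncomputable def jacobianMatrix {ι : Type*} (f : ι → MvPolynomial σ K) :
    Matrix ι σ (MvPolynomial σ K) :=
  Matrix.of fun a j => pderiv j (f a)

theorem mkDerivation_apply_eq_jacobianMatrix_mulVec [Fintype σ] {ι : Type*}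
    (v : σ → MvPolynomial σ K) (f : ι → MvPolynomial σ K) (a : ι) :
    mkDerivation K v (f a) = (jacobianMatrix f).mulVec v a := by
  rw [derivation_apply_eq_sum_mul_pderiv]
  simp [jacobianMatrix, Matrix.mulVec, dotProduct, mul_comm]

variable {m : ℕ}

/-- The Jacobian derivation `g ↦ det (∂(g, f₁, …, fₘ)/∂(x₀, …, xₘ))` of `m` polynomials in `m + 1`
variables, given by its values on the variables. -/
noncomputable def jacobianDerivation (f : Fin m → MvPolynomial (Fin (m + 1)) K) :
    Derivation K (MvPolynomial (Fin (m + 1)) K) (MvPolynomial (Fin (m + 1)) K) :=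
  mkDerivation K (signedMinor (jacobianMatrix f))

theorem jacobianDerivation_X (f : Fin m → MvPolynomial (Fin (m + 1)) K) (i : Fin (m + 1)) :
    jacobianDerivation f (X i) = signedMinor (jacobianMatrix f) i :=
  mkDerivation_X K _ i

theorem jacobianDerivation_apply_self (f : Fin m → MvPolynomial (Fin (m + 1)) K) (a : Fin m) :
    jacobianDerivation f (f a) = 0 := by
  rw [jacobianDerivation, mkDerivation_apply_eq_jacobianMatrix_mulVec, mulVec_signedMinor,
    Pi.zero_apply]

theorem divergence_jacobianDerivation (f : Fin m → MvPolynomial (Fin (m + 1)) K) :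
    divergence (jacobianDerivation f) = 0 := by
  simp_rw [divergence, jacobianDerivation_X]
  exact sum_derivation_signedMinor_eq_zero pderiv_pderiv_comm f

variable {p : ℕ} [NeZero p] [CharP K p] {f : Fin m → MvPolynomial (Fin (m + 1)) K}
  {d : Derivation K (MvPolynomial (Fin (m + 1)) K) (MvPolynomial (Fin (m + 1)) K)}

theorem PIndependent.jacobianDerivation_ne_zero [IsDomain K] (hf : PIndependent p f)
    (hdf : ∀ a, d (f a) = 0) (hd : d ≠ 0) : jacobianDerivation f ≠ 0 := by
  intro hJ
  obtain ⟨i, hi⟩ : ∃ i, d (X i) ≠ 0 := by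
    by_contra! h
    exact hd (derivation_ext h)
  have hminor : signedMinor (jacobianMatrix f) i = 0 := by rw [← jacobianDerivation_X, hJ]; rfl
  obtain ⟨v, hv, hvi, hMv⟩ := exists_mulVec_eq_zero_of_signedMinor_eq_zero hminor
  have hvf (a : Fin m) : mkDerivation K v (f a) = 0 := by
    rw [mkDerivation_apply_eq_jacobianMatrix_mulVec, hMv, Pi.zero_apply]
  have hsmul : d (X i) • mkDerivation K v = 0 := by
    rw [hf.apply_smul_eq_apply_smul (by simp) hdf hvf, mkDerivation_X, hvi, zero_smul]
  refine hv (funext fun j => ?_)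
  simpa [hi] using DFunLike.congr_fun hsmul (X j)

theorem PIndependent.exists_jacobianDerivation_eq_smul [IsDomain K] [UniqueFactorizationMonoid K]
    (hf : PIndependent p f) (hdf : ∀ a, d (f a) = 0)
    (hd : ∀ q : MvPolynomial (Fin (m + 1)) K, (∀ i, q ∣ d (X i)) → IsUnit q) :
    ∃ g : MvPolynomial (Fin (m + 1)) K, g ≠ 0 ∧ jacobianDerivation f = g • d := by
  have hd0 : d ≠ 0 := by
    rintro rfl
    exact not_isUnit_zero (hd 0 fun _ => dvd_rfl)
  have hprop (i j : Fin (m + 1)) : d (X i) * jacobianDerivation f (X j) =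
      jacobianDerivation f (X i) * d (X j) :=
    DFunLike.congr_fun
      (hf.apply_smul_eq_apply_smul (by simp) hdf (jacobianDerivation_apply_self f) (X i)) (X j)
  obtain ⟨g, hg⟩ := exists_eq_mul_of_mul_eq_mul hd hprop
  have hJ : jacobianDerivation f = g • d := derivation_ext hg
  refine ⟨g, ?_, hJ⟩
  rintro rfl
  exact hf.jacobianDerivation_ne_zero hdf hd0 (by rw [hJ, zero_smul])

end Jacobian

/-- Final remark.  `K` a UFD of characteristic `p > 0`, `d` an
irreducible `K`-derivation of `K[x₁,…,xₙ]` (`n = m + 1`), i.e. the `d(xᵢ)` are in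
common coprime.  If `f₁,…,f_{n-1}` are constants of `d`, `p`-independent over
`K[x₁^p,…,xₙ^p]`, and `F̄ = dgcd(f₁,…,f_{n-1})` (a gcd of all the `(n-1)×(n-1)`
Jacobian minors), then `d* = 0 ↔ d(F̄) = 0`. -/
theorem final_remark_divergence_iff
    {K : Type*} [CommRing K] [IsDomain K] [UniqueFactorizationMonoid K]
    (p : ℕ) [Fact p.Prime] [CharP K p] (m : ℕ)
    (d : Derivation K (MvPolynomial (Fin (m + 1)) K) (MvPolynomial (Fin (m + 1)) K))
    (hcop : ∀ q : MvPolynomial (Fin (m + 1)) K, (∀ i, q ∣ d (X i)) → IsUnit q)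
    (f : Fin m → MvPolynomial (Fin (m + 1)) K)
    (hdf : ∀ i, d (f i) = 0)
    (hind : LinearIndependent
      ↥(Algebra.adjoin K
          (Set.range fun i : Fin (m + 1) => (X i : MvPolynomial (Fin (m + 1)) K) ^ p))
      (fun e : Fin m → Fin p => ∏ i, f i ^ (e i : ℕ)))
    (Fbar : MvPolynomial (Fin (m + 1)) K)
    (hFbar₁ : ∀ j : Fin m → Fin (m + 1),
      Fbar ∣ Matrix.det (Matrix.of fun a b => pderiv (j b) (f a)))
    (hFbar₂ : ∀ q : MvPolynomial (Fin (m + 1)) K,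
      (∀ j : Fin m → Fin (m + 1),
        q ∣ Matrix.det (Matrix.of fun a b => pderiv (j b) (f a))) → q ∣ Fbar) :
    (∑ i, pderiv i (d (X i)) = 0) ↔ d Fbar = 0 := by
  have hf : PIndependent p f := hind
  obtain ⟨G, hG, hJ⟩ := hf.exists_jacobianDerivation_eq_smul hdf hcop
  have hminor (i : Fin (m + 1)) : signedMinor (jacobianMatrix f) i = G * d (X i) := by
    rw [← jacobianDerivation_X, hJ, Derivation.smul_apply, smul_eq_mul]
  have hdvd : G ∣ Fbar :=
    hFbar₂ G (dvd_det_submatrix_of_dvd_signedMinor (jacobianMatrix f) fun i => ⟨_, hminor i⟩)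
  have hassoc : Associated G Fbar := associated_of_dvd_of_forall_dvd_mul hcop hG hdvd fun i =>
    hminor i ▸ (hFbar₁ i.succAbove).mul_left _
  have hdiv : G * divergence d + d G = 0 := by
    rw [← divergence_smul, ← hJ, divergence_jacobianDerivation]
  calc divergence d = 0 ↔ G * divergence d = 0 := (mul_eq_zero_iff_left hG).symm
    _ ↔ d G = 0 := by rw [eq_neg_of_add_eq_zero_left hdiv, neg_eq_zero]
    _ ↔ d Fbar = 0 := derivation_eq_zero_iff_of_associated d hassoc
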